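/- For all natural numbers m and all k ≥ 2, the set {α ∈ OT0 : α < Ω and H_α(k) ≤ m} is finite. -/

import Mathlib

set_option maxHeartbeats 1000000

attribute [local instance] Classical.propDecidable

/-- Raw terms of the system `T`: `0`, `1`, `ψᵢ a` and (right-nested) sums `a + b`. -/
inductive Tm : Type where
  | zero : Tm
  | one  : Tm
  | psi  : ℕ → Tm → Tm
  | add  : Tm → Tm → Tm
deriving DecidableEq

instance : Nonempty Tm := ⟨Tm.zero⟩

/-- Head (first summand) of a term. -/
def Tm.hd : Tm → Tm
  | .add a _ => a
  | t => t

/-- Tail (remaining summands) of a term. -/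
def Tm.tl : Tm → Tm
  | .add _ b => b
  | _ => .zero

/-- Whether a term is a genuine sum. -/
def Tm.isAdd : Tm → Prop
  | .add _ _ => True
  | _ => False

/-- The comparison relation `<` on terms of `T`. -/
inductive TLt : Tm → Tm → Prop where
  | zero_lt {a : Tm} : a ≠ Tm.zero → TLt Tm.zero a
  | one_lt_psi0 {a : Tm} : TLt Tm.one (Tm.psi 0 a)
  | psi_mono {i : ℕ} {a b : Tm} : TLt a b → TLt (Tm.psi i a) (Tm.psi i b)
  | psi_lt {i j : ℕ} {a b : Tm} : i < j → TLt (Tm.psi i a) (Tm.psi j b)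
  | lex_hd {a b : Tm} : (Tm.isAdd a ∨ Tm.isAdd b) → TLt (Tm.hd a) (Tm.hd b) → TLt a b
  | lex_tl {a b : Tm} : (Tm.isAdd a ∨ Tm.isAdd b) → Tm.hd a = Tm.hd b →
      TLt (Tm.tl a) (Tm.tl b) → TLt a b

/-- `≤` on terms. -/
def TLe (a b : Tm) : Prop := TLt a b ∨ a = b

/-- Addition of terms: summands of the left argument smaller than the head of the
right argument are discarded. -/
noncomputable def Tm.addT : Tm → Tm → Tm
  | .zero, b => b
  | a, .zero => a
  | .add p r, b => if TLt p (Tm.hd b) then b else Tm.add p (Tm.addT r b)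
  | a, b => if TLt a (Tm.hd b) then b else Tm.add a b

/-- The term representing a natural number. -/
def natToTm : ℕ → Tm
  | 0 => .zero
  | 1 => .one
  | n + 2 => Tm.add Tm.one (natToTm (n + 1))

/-- The natural number represented by a (numeral) term. -/
def tmToNat : Tm → ℕ
  | .zero => 0
  | .one => 1
  | .psi _ _ => 0
  | .add a b => tmToNat a + tmToNat b

/-- Multiplication of a (principal) term by a natural number. -/
noncomputable def mulNat (a : Tm) : ℕ → Tm
  | 0 => .zero
  | n + 1 => Tm.addT (mulNat a n) a

/-- Principal terms: `1` and the `ψᵢ`-terms. -/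
def Tm.IsPrincipal : Tm → Prop
  | .one => True
  | .psi _ _ => True
  | _ => False

/-- The well-formed terms of the system `T`. -/
inductive InT : Tm → Prop where
  | zero : InT .zero
  | one : InT .one
  | psi {i : ℕ} {a : Tm} : i < 3 → InT a → InT (.psi i a)
  | add {a b : Tm} : Tm.IsPrincipal a → InT a → InT b → b ≠ .zero →
      TLe (Tm.hd b) a → InT (.add a b)

/-- `ω := ψ₀0`. -/
def omegaT : Tm := .psi 0 .zero
/-- `Ω := ψ₁0`. -/
def OmegaT : Tm := .psi 1 .zero
/-- `Ω₂ := ψ₂0`. -/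
def Omega2T : Tm := .psi 2 .zero

/-- The type `tp(α)` of a term. -/
def tp : Tm → Tm
  | .zero => .zero
  | .one => .one
  | .add _ b => tp b
  | .psi i a =>
    if tp a = Tm.zero then Tm.psi i Tm.zero
    else if tp a = Tm.one then omegaT
    else if (i = 0 ∧ tp a = OmegaT) ∨ (i = 1 ∧ tp a = Omega2T) then omegaT
    else tp a

/-- The fundamental sequence `α[x]` of a term `α` at index `x`. -/
noncomputable def fund : Tm → Tm → Tm
  | .zero, _ => .zero
  | .one, _ => .zero
  | .add a b, x => Tm.addT a (fund b x)
  | .psi i a, x =>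
    if tp a = Tm.zero then x
    else if tp a = Tm.one then mulNat (Tm.psi i (fund a Tm.zero)) (tmToNat x)
    else if i = 0 ∧ tp a = OmegaT then
      Tm.psi 0 (fund a (Nat.rec (motive := fun _ => Tm) Tm.zero
        (fun _ ih => Tm.psi 0 (fund a ih)) (tmToNat x)))
    else if i = 1 ∧ tp a = Omega2T then
      Tm.psi 1 (fund a (Nat.rec (motive := fun _ => Tm) Tm.zero
        (fun _ ih => Tm.psi 1 (fund a ih)) (tmToNat x)))
    else Tm.psi i (fund a x)
termination_by t _ => sizeOf t
decreasing_by all_goals simp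

/-- The finite set `G₁(α)`. -/
def G1 : Tm → Finset Tm
  | .zero => ∅
  | .one => ∅
  | .psi 0 _ => ∅
  | .psi 1 b => insert b (G1 b)
  | .psi 2 b => G1 b
  | .psi (_ + 3) _ => ∅
  | .add a b => G1 a ∪ G1 b

/-- The finite set `G₀(α)`. -/
def G0 : Tm → Finset Tm
  | .zero => ∅
  | .one => ∅
  | .psi 0 b => insert b (G0 b)
  | .psi 1 b => G0 b
  | .psi 2 b => G0 b
  | .psi (_ + 3) _ => ∅
  | .add a b => G0 a ∪ G0 b

/-- The well-founded subsystem `OT ⊆ T`. -/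
inductive InOT : Tm → Prop where
  | zero : InOT .zero
  | one : InOT .one
  | psi2 {b : Tm} : InOT b → InOT (.psi 2 b)
  | add {a b : Tm} : InT (.add a b) → InOT a → InOT b → InOT (.add a b)
  | psi1 {b : Tm} : InOT b → (∀ γ ∈ G1 b, TLt γ b) → InOT (.psi 1 b)
  | psi0 {b : Tm} : InOT b → (∀ γ ∈ G0 b, TLt γ b) → TLt b Omega2T → InOT (.psi 0 b)

/-- The norm `N(α)`. -/
def normN : Tm → ℕ
  | .zero => 0
  | .one => 1
  | .psi _ b => 1 + normN b
  | .add a b => normN a + normN b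

/-- `OT₀ := {α ∈ OT : α < ψ₁Ω₂ and G₀α < ψ₁Ω₂}`. -/
def InOT0 (a : Tm) : Prop :=
  InOT a ∧ TLt a (Tm.psi 1 Omega2T) ∧ ∀ γ ∈ G0 a, TLt γ (Tm.psi 1 Omega2T)

/-- Single-step descent: `b = a[x]` for some term `x ≤ n`. -/
def stepLe (n : ℕ) (b a : Tm) : Prop := ∃ x : Tm, TLe x (natToTm n) ∧ b = fund a x

/-- `a <ₙ b` : transitive closure of single-step descent. -/
def ltN (n : ℕ) (a b : Tm) : Prop := Relation.TransGen (stepLe n) a b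

/-- `a ≤ₙ b` : reflexive transitive closure of single-step descent. -/
def leN (n : ℕ) (a b : Tm) : Prop := Relation.ReflTransGen (stepLe n) a b

mutual
/-- Graph of the Hardy hierarchy: `HRel α k n` means `H_α(k) = n`. -/
inductive HRel : Tm → ℕ → ℕ → Prop where
  | zero {k : ℕ} : HRel Tm.zero k k
  | succ {α : Tm} {k n : ℕ} : tp α = Tm.one → HRel (fund α Tm.zero) k n →
      HRel α k (n * k)
  | lim {α β : Tm} {k n : ℕ} : tp α = omegaT → HIter α k k β → HRel β k n →
      HRel α k n

/-- Graph of the iteration `α{b}`: `HIter α k b β` means `α{b} = β`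
(where `α{0} = α[0]` and `α{b+1} = α[H_(α{b})(k)]`). -/
inductive HIter : Tm → ℕ → ℕ → Tm → Prop where
  | zero {α : Tm} {k : ℕ} : HIter α k 0 (fund α Tm.zero)
  | succ {α β : Tm} {k b n : ℕ} : HIter α k b β → HRel β k n →
      HIter α k (b + 1) (fund α (natToTm n))
end

/-- The Hardy function `H_α(k)`. -/
noncomputable def H (α : Tm) (k : ℕ) : ℕ := sInf {n | HRel α k n}

/-- The (unique, when it exists) ordinal term of the `k`-normal form of `m`:
the maximal `α ∈ OT₀ ∩ Ω` with `H_α(k) ≤ m`. -/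
noncomputable def nfAlpha (k m : ℕ) : Tm :=
  Classical.epsilon fun α =>
    InOT0 α ∧ TLt α OmegaT ∧ H α k ≤ m ∧
      ∀ β : Tm, InOT0 β → TLt β OmegaT → TLt α β → m < H β k

theorem tmToNat_le_normN (t : Tm) : tmToNat t ≤ normN t := by
  induction t with
  | zero => simp [tmToNat, normN]
  | one => simp [tmToNat, normN]
  | psi i a ih => simp [tmToNat, normN]
  | add a b iha ihb => simp only [tmToNat, normN]; omega

mutual
/-- Base change `α[k ← k+1]` on terms. -/
noncomputable def bcT (k : ℕ) : Tm → Tm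
  | .zero => .zero
  | .one => .one
  | .psi i a => .psi i (bcT k a)
  | .add a b =>
      if a = Tm.one then natToTm (bcN k (tmToNat (Tm.add a b)))
      else if h : 0 < normN a ∧ 0 < normN b then Tm.add (bcT k a) (bcT k b)
      else Tm.zero
termination_by a => 2 * normN a + 1
decreasing_by
  all_goals simp only [normN]
  · omega
  · have := tmToNat_le_normN (Tm.add a b); simp only [normN] at this ⊢; omega
  · omega
  · omega

/-- Base change `m[k ← k+1]` on natural numbers. -/
noncomputable def bcN (k m : ℕ) : ℕ :=
  if h1 : m < k then m
  else if h2 : m = k then k + 1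
  else if hg : normN (nfAlpha k m) < m ∧ 0 < H (nfAlpha k m) k ∧ H (nfAlpha k m) k ≤ m then
    H (bcT k (nfAlpha k m)) (k + 1) * (m / H (nfAlpha k m) k) + bcN k (m % H (nfAlpha k m) k)
  else 0
termination_by 2 * m
decreasing_by
  · omega
  · have := Nat.mod_lt m (y := H (nfAlpha k m) k) hg.2.1; omega
end

mutual
/-- The ordinal assignment `o_k` on terms of `OT₀`. -/
noncomputable def oT (k : ℕ) : Tm → Tm
  | .zero => .zero
  | .one => .one
  | .psi 0 b => .psi 1 (oT k b)
  | .psi 1 b => .psi 2 (oT k b)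
  | .psi (_ + 2) _ => .zero
  | .add a b =>
      if a = Tm.one then oN k (tmToNat (Tm.add a b))
      else if h : 0 < normN a ∧ 0 < normN b then Tm.addT (oT k a) (oT k b)
      else Tm.zero
termination_by a => 2 * normN a + 1
decreasing_by
  all_goals simp only [normN]
  · omega
  · omega
  · have := tmToNat_le_normN (Tm.add a b); simp only [normN] at this ⊢; omega
  · omega
  · omega

/-- The ordinal assignment `o_k` on natural numbers. -/
noncomputable def oN (k m : ℕ) : Tm :=
  if h1 : m < k then natToTm m
  else if h2 : m = k then omegaT
  else if hg : normN (nfAlpha k m) < m ∧ 0 < H (nfAlpha k m) k ∧ H (nfAlpha k m) k ≤ m then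
    Tm.addT (Tm.psi 0 (oT k (nfAlpha k m))) (oN k (m - H (nfAlpha k m) k))
  else Tm.zero
termination_by 2 * m
decreasing_by
  · omega
  · omega
end

/-- Ordinal contexts: a term with a single hole, either replacing a summand
(`ξ + ⟦·⟧ + η`) or nested under collapsing functions (`ξ + ψᵢ(μ⟦·⟧) + η`). -/
inductive Ctx : Type where
  | base : Tm → Tm → Ctx
  | psiC : Tm → ℕ → Ctx → Tm → Ctx

/-- Filling the hole of a context with a term. -/
noncomputable def Ctx.fill : Ctx → Tm → Tm
  | .base ξ η, γ => Tm.addT (Tm.addT ξ γ) η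
  | .psiC ξ i μ η, γ => Tm.addT (Tm.addT ξ (Tm.psi i (Ctx.fill μ γ))) η

/-- The truncated context `λ⁻⟦·⟧`: all summands following the hole are removed,
at every level. -/
def Ctx.trunc : Ctx → Ctx
  | .base ξ _ => .base ξ Tm.zero
  | .psiC ξ i μ _ => .psiC ξ i (Ctx.trunc μ) Tm.zero

/-- A context is valid if only `ψ₀` and `ψ₁` occur on the path to the hole. -/
def Ctx.Valid : Ctx → Prop
  | .base _ _ => True
  | .psiC _ i μ _ => i ≤ 1 ∧ Ctx.Valid μ

/-- A context is `ψ₀`-nesting free if its hole is not in the scope of a `ψ₀`. -/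
def Ctx.NestFree : Ctx → Prop
  | .base _ _ => True
  | .psiC _ i μ _ => i = 1 ∧ Ctx.NestFree μ

/-!
There are only finitely many terms of norm at most `m`, so it suffices that `N α ≤ H_α(k)`. For a
limit `α` the norm does not decrease in passing from `α` to `α[n]` with `n ≥ 2`, and a successor
exceeds its predecessor by one in norm while the Hardy value is multiplied by `k ≥ 2`; since the
indices `H_{α{b}}(k)` occurring in the iteration `α{b}` are at least `k`, the bound follows by
induction on the computation of `H_α(k)`.

That `H_α(k)` is defined at all is Buchholz's accessibility argument. Descent from a term below
`Ωₙ₊₁` may use any index below `Ωₙ`, provided that the index is itself accessible for the descent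
one level lower. If `a` is accessible at level `i + 1`, then `ψᵢ a` is accessible at level `i`, and
so every term below `Ωₙ₊₁` is accessible at level `n`.
-/

/-! ### The order on terms -/

/-- The intended order of `T`: `TLt` together with `1 < ψᵢ a` for every `i`. The relation `TLt` has
that clause for `i = 0` only, and is therefore not transitive. -/
inductive Prec : Tm → Tm → Prop where
  | zero_lt {a : Tm} : a ≠ .zero → Prec .zero a
  | one_lt_psi {i : ℕ} {a : Tm} : Prec .one (.psi i a)
  | psi_mono {i : ℕ} {a b : Tm} : Prec a b → Prec (.psi i a) (.psi i b)
  | psi_lt {i j : ℕ} {a b : Tm} : i < j → Prec (.psi i a) (.psi j b)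
  | lex_hd {a b : Tm} : a.isAdd ∨ b.isAdd → Prec a.hd b.hd → Prec a b
  | lex_tl {a b : Tm} : a.isAdd ∨ b.isAdd → a.hd = b.hd → Prec a.tl b.tl → Prec a b

namespace Prec

theorem not_zero (a : Tm) : ¬ Prec a .zero := by
  induction a with
  | zero => rintro (h | _ | _ | _ | h | h) <;> simp_all [Tm.isAdd]
  | one => rintro (h | _ | _ | _ | h | h) <;> simp_all [Tm.isAdd]
  | psi => rintro (h | _ | _ | _ | h | h) <;> simp_all [Tm.isAdd]
  | add p b ihp ihb =>
    intro h
    cases h with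
    | lex_hd _ h => exact ihp h
    | lex_tl _ _ h => exact ihb h

theorem irrefl (a : Tm) : ¬ Prec a a := by
  induction a with
  | zero => exact not_zero _
  | one => rintro (_ | _ | _ | _ | h | h) <;> simp_all [Tm.isAdd]
  | psi i a ih => rintro (_ | _ | _ | _ | h | h) <;> simp_all [Tm.isAdd]
  | add p b ihp ihb =>
    intro h
    cases h with
    | lex_hd _ h => exact ihp h
    | lex_tl _ _ h => exact ihb h

theorem iff_lex {a b : Tm} (ha : a ≠ .zero) :
    Prec a b ↔ Prec a.hd b.hd ∨ a.hd = b.hd ∧ Prec a.tl b.tl := by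
  constructor
  · intro h
    by_cases hadd : a.isAdd ∨ b.isAdd
    · cases h with
      | zero_lt => exact absurd rfl ha
      | lex_hd _ h => exact .inl h
      | lex_tl _ h h' => exact .inr ⟨h, h'⟩
      | _ => simp [Tm.isAdd] at hadd
    · left; cases a <;> cases b <;> simp_all [Tm.isAdd, Tm.hd]
  · intro h
    by_cases hadd : a.isAdd ∨ b.isAdd
    · exact h.elim (lex_hd hadd) fun h => lex_tl hadd h.1 h.2
    · cases a <;> cases b <;> simp_all [Tm.isAdd, Tm.hd, Tm.tl, not_zero]

theorem sizeOf_hd_add_lt {a b c : Tm} (h : a.isAdd ∨ b.isAdd ∨ c.isAdd) :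
    sizeOf a.hd + sizeOf b.hd + sizeOf c.hd < sizeOf a + sizeOf b + sizeOf c := by
  have hle (a : Tm) : sizeOf a.hd ≤ sizeOf a := by cases a <;> simp +arith [Tm.hd]
  have hlt {a : Tm} (h : a.isAdd) : sizeOf a.hd < sizeOf a := by
    cases a <;> simp_all +arith [Tm.isAdd, Tm.hd]
  have ha := hle a
  have hb := hle b
  have hc := hle c
  rcases h with h | h | h <;> have := hlt h <;> omega

theorem sizeOf_tl_add_lt {a b c : Tm} (h : a.isAdd ∨ b.isAdd ∨ c.isAdd) :
    sizeOf a.tl + sizeOf b.tl + sizeOf c.tl < sizeOf a + sizeOf b + sizeOf c := by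
  have hle (a : Tm) : sizeOf a.tl ≤ sizeOf a := by cases a <;> simp +arith [Tm.tl]
  have hlt {a : Tm} (h : a.isAdd) : sizeOf a.tl < sizeOf a := by
    cases a <;> simp_all [Tm.isAdd, Tm.tl]
  have ha := hle a
  have hb := hle b
  have hc := hle c
  rcases h with h | h | h <;> have := hlt h <;> omega

theorem trans {a b c : Tm} (hab : Prec a b) (hbc : Prec b c) : Prec a c := by
  by_cases ha : a = .zero
  · subst ha
    exact zero_lt fun hc => not_zero b (hc ▸ hbc)
  have hb : b ≠ .zero := fun hb => not_zero a (hb ▸ hab)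
  by_cases hadd : a.isAdd ∨ b.isAdd ∨ c.isAdd
  · rw [iff_lex ha] at hab ⊢
    rw [iff_lex hb] at hbc
    rcases hab with hab | ⟨eab, hab⟩ <;> rcases hbc with hbc | ⟨ebc, hbc⟩
    · exact .inl (trans hab hbc)
    · exact .inl (ebc ▸ hab)
    · exact .inl (eab ▸ hbc)
    · exact .inr ⟨eab.trans ebc, trans hab hbc⟩
  · cases hab with
    | zero_lt => exact absurd rfl ha
    | one_lt_psi => cases hbc <;> simp_all [Tm.isAdd, one_lt_psi]
    | psi_mono h => cases hbc with
      | psi_mono h' => exact psi_mono (trans h h')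
      | psi_lt h' => exact psi_lt h'
      | _ => simp_all [Tm.isAdd]
    | psi_lt h => cases hbc with
      | psi_mono => exact psi_lt h
      | psi_lt h' => exact psi_lt (h.trans h')
      | _ => simp_all [Tm.isAdd]
    | _ => simp_all [Tm.isAdd]
termination_by sizeOf a + sizeOf b + sizeOf c
decreasing_by
  · exact sizeOf_hd_add_lt hadd
  · exact sizeOf_tl_add_lt hadd
  · subst_vars; simp only [Tm.psi.sizeOf_spec]; omega

end Prec

instance : IsStrictOrder Tm Prec where
  irrefl := Prec.irrefl
  trans _ _ _ := Prec.trans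

instance : PartialOrder Tm := partialOrderOfSO Prec

theorem TLt.lt {a b : Tm} (h : TLt a b) : a < b := by
  induction h with
  | zero_lt h => exact Prec.zero_lt h
  | one_lt_psi0 => exact Prec.one_lt_psi
  | psi_mono _ ih => exact Prec.psi_mono ih
  | psi_lt h => exact Prec.psi_lt h
  | lex_hd h _ ih => exact Prec.lex_hd h ih
  | lex_tl h e _ ih => exact Prec.lex_tl h e ih

theorem TLe.le {a b : Tm} (h : TLe a b) : a ≤ b :=
  h.elim (fun h => h.lt.le) le_of_eq

/-- The term `Ωᵢ = ψᵢ 0`, where `Ω₀` is `ω`. -/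
abbrev OmegaN (i : ℕ) : Tm := .psi i .zero

namespace Tm

variable {a b c p q : Tm} {i j : ℕ}

theorem not_lt_zero : ¬ a < zero := Prec.not_zero a

theorem zero_lt (h : a ≠ zero) : zero < a := Prec.zero_lt h

theorem zero_lt_one : zero < one := zero_lt (by simp)

theorem zero_lt_psi : zero < psi i a := zero_lt (by simp)

theorem one_lt_psi : one < psi i a := Prec.one_lt_psi

theorem psi_lt_psi_iff : psi i a < psi j b ↔ i < j ∨ i = j ∧ a < b := by
  constructor
  · intro h
    cases h with
    | psi_mono h => exact .inr ⟨rfl, h⟩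
    | psi_lt h => exact .inl h
    | lex_hd h | lex_tl h => simp [isAdd] at h
  · rintro (h | ⟨rfl, h⟩)
    exacts [Prec.psi_lt h, Prec.psi_mono h]

theorem OmegaN_le_psi (h : i ≤ j) : OmegaN i ≤ psi j a := by
  rcases h.lt_or_eq with h | rfl
  · exact (psi_lt_psi_iff.2 (.inl h)).le
  · by_cases ha : a = zero
    · rw [ha]
    · exact (psi_lt_psi_iff.2 (.inr ⟨rfl, zero_lt ha⟩)).le

theorem OmegaN_mono : Monotone OmegaN := fun _ _ => OmegaN_le_psi

theorem OmegaN_lt_OmegaN_iff : OmegaN i < OmegaN j ↔ i < j := by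
  simp only [psi_lt_psi_iff, not_lt_zero, and_false, or_false]

theorem IsPrincipal.ne_zero (hp : p.IsPrincipal) : p ≠ zero := by
  rintro rfl; exact hp

theorem IsPrincipal.hd_eq (hp : p.IsPrincipal) : p.hd = p := by
  cases p <;> first | rfl | exact hp.elim

theorem IsPrincipal.tl_eq (hp : p.IsPrincipal) : p.tl = zero := by
  cases p <;> first | rfl | exact hp.elim

theorem isPrincipal_one : one.IsPrincipal := trivial

theorem isPrincipal_psi : (psi i a).IsPrincipal := trivial

theorem hd_le_hd (h : a ≤ b) : a.hd ≤ b.hd := by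
  rcases h.eq_or_lt with rfl | h
  · rfl
  by_cases ha : a = zero
  · subst ha
    by_cases hb : b.hd = zero
    · rw [hb]; rfl
    · exact (zero_lt hb).le
  · rcases (Prec.iff_lex ha).1 h with h | ⟨h, -⟩
    exacts [le_of_lt h, h.le]

theorem lt_iff_hd_lt (hq : q.IsPrincipal) : a < q ↔ a.hd < q := by
  by_cases ha : a = zero
  · rw [ha]; rfl
  · change Prec a q ↔ Prec a.hd q
    simp [Prec.iff_lex ha, hq.hd_eq, hq.tl_eq, Prec.not_zero]

theorem add_lt_add_left (h : b < c) : add p b < add p c :=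
  Prec.lex_tl (.inl trivial) rfl h

theorem lt_add_self (hp : p.IsPrincipal) (hb : b ≠ zero) : p < add p b :=
  Prec.lex_tl (.inr trivial) hp.hd_eq (hp.tl_eq ▸ zero_lt hb)

theorem addT_zero : addT a zero = a := by
  cases a <;> rfl

theorem add_addT (hc : c ≠ zero) (h : c.hd ≤ a) : addT (add a b) c = add a (addT b c) := by
  have hlt : ¬ TLt a c.hd := fun h' => (h'.lt.trans_le h).false
  cases c <;> simp_all [addT]

theorem addT_eq_add (hp : p.IsPrincipal) (hb : b ≠ zero) (h : b.hd ≤ p) : addT p b = add p b := by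
  have hlt : ¬ TLt p b.hd := fun h' => (h'.lt.trans_le h).false
  cases p <;> cases b <;> simp_all [addT, IsPrincipal]

end Tm

theorem mulNat_one {p : Tm} : mulNat p 1 = p := by
  simp [mulNat, Tm.addT]

theorem mulNat_add_two {p : Tm} (hp : p.IsPrincipal) (n : ℕ) :
    mulNat p (n + 2) = .add p (mulNat p (n + 1)) := by
  induction n with
  | zero =>
    rw [mulNat, mulNat_one, Tm.addT_eq_add hp hp.ne_zero hp.hd_eq.le]
  | succ n ih =>
    calc mulNat p (n + 3) = Tm.addT (.add p (mulNat p (n + 1))) p := by rw [mulNat, ih]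
      _ = .add p (mulNat p (n + 2)) := Tm.add_addT hp.ne_zero hp.hd_eq.le

theorem hd_mulNat_succ {p : Tm} (hp : p.IsPrincipal) (n : ℕ) : (mulNat p (n + 1)).hd = p := by
  cases n with
  | zero => rw [mulNat_one, hp.hd_eq]
  | succ n => rw [mulNat_add_two hp]; rfl

theorem mulNat_lt {p q : Tm} (hp : p.IsPrincipal) (hq : q.IsPrincipal) (h : p < q) (n : ℕ) :
    mulNat p n < q := by
  cases n with
  | zero => exact Tm.zero_lt hq.ne_zero
  | succ n => rwa [Tm.lt_iff_hd_lt hq, hd_mulNat_succ hp]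

theorem normN_mulNat {p : Tm} (hp : p.IsPrincipal) (n : ℕ) : normN (mulNat p n) = n * normN p := by
  induction n with
  | zero => simp [mulNat, normN]
  | succ n ih =>
    cases n with
    | zero => simp [mulNat_one]
    | succ n => rw [mulNat_add_two hp, normN, ih]; ring

theorem natToTm_eq_mulNat (n : ℕ) : natToTm n = mulNat .one n := by
  match n with
  | 0 => rfl
  | 1 => rfl
  | n + 2 => rw [natToTm, natToTm_eq_mulNat (n + 1), mulNat_add_two Tm.isPrincipal_one]

theorem natToTm_lt_psi {i : ℕ} {a : Tm} (n : ℕ) : natToTm n < .psi i a :=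
  natToTm_eq_mulNat n ▸ mulNat_lt Tm.isPrincipal_one Tm.isPrincipal_psi Tm.one_lt_psi n

theorem tmToNat_natToTm (n : ℕ) : tmToNat (natToTm n) = n := by
  match n with
  | 0 => rfl
  | 1 => rfl
  | n + 2 => rw [natToTm, tmToNat, tmToNat_natToTm (n + 1), tmToNat]; ring

/-! ### Fundamental sequences and the norm -/

/-- The terms of `T` in which `ψᵢ` is applied only to arguments below `Ωᵢ₊₂`. They include `OT`, and
unlike for `OT`, closure under fundamental sequences needs no analysis of the sets `Gᵢ`. -/
inductive Stratified : Tm → Prop where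
  | zero : Stratified .zero
  | one : Stratified .one
  | psi {i : ℕ} {a : Tm} : i < 3 → Stratified a → a < OmegaN (i + 2) → Stratified (.psi i a)
  | add {p b : Tm} : p.IsPrincipal → Stratified p → Stratified b → b ≠ .zero → b.hd ≤ p →
      Stratified (.add p b)

/-- The terms of the iteration `z₀ = 0`, `zₙ₊₁ = ψᵢ(a[zₙ])` used to collapse a term `a` of type
`Ωᵢ₊₁`. -/
noncomputable def collapseIter (i : ℕ) (a : Tm) : ℕ → Tm
  | 0 => .zero
  | n + 1 => .psi i (fund a (collapseIter i a n))

theorem collapseIter_eq_rec (i : ℕ) (a : Tm) (n : ℕ) :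
    collapseIter i a n =
      Nat.rec (motive := fun _ => Tm) .zero (fun _ z => .psi i (fund a z)) n := by
  induction n with
  | zero => rfl
  | succ n ih => rw [collapseIter, ih]

/-- The clauses defining `tp (ψᵢ a)` and `(ψᵢ a)[x]`, distinguished by `tp a`. -/
inductive PsiClause (i : ℕ) (a : Tm) : Prop where
  | zero : a = .zero → tp (.psi i a) = OmegaN i → (∀ x, fund (.psi i a) x = x) → PsiClause i a
  | succ : tp a = .one → tp (.psi i a) = omegaT →
      (∀ x, fund (.psi i a) x = mulNat (.psi i (fund a .zero)) (tmToNat x)) → PsiClause i a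
  | collapse : tp a = OmegaN (i + 1) → tp (.psi i a) = omegaT →
      (∀ x, fund (.psi i a) x = .psi i (fund a (collapseIter i a (tmToNat x)))) → PsiClause i a
  | inner (j : ℕ) : j ≤ i → tp a = OmegaN j → tp (.psi i a) = OmegaN j →
      (∀ x, fund (.psi i a) x = .psi i (fund a x)) → PsiClause i a

namespace Stratified

variable {a b p q x : Tm} {i n : ℕ}

theorem lt_OmegaN (ha : Stratified a) (hi : 3 ≤ i) : a < OmegaN i := by
  induction ha with
  | zero => exact Tm.zero_lt_psi
  | one => exact Tm.one_lt_psi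
  | psi hj => exact Tm.psi_lt_psi_iff.2 (.inl (by omega))
  | add hp _ _ _ _ ihp => rwa [Tm.lt_iff_hd_lt Tm.isPrincipal_psi]

theorem of_add (h : Stratified (.add p b)) :
    p.IsPrincipal ∧ Stratified p ∧ Stratified b ∧ b ≠ .zero ∧ b.hd ≤ p := by
  cases h with
  | add hp hsp hsb hb hle => exact ⟨hp, hsp, hsb, hb, hle⟩

theorem of_psi (h : Stratified (.psi i a)) : i < 3 ∧ Stratified a ∧ a < OmegaN (i + 2) := by
  cases h with
  | psi hi ha hlt => exact ⟨hi, ha, hlt⟩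

theorem lt_of_add_lt (h : Stratified (.add p b)) (hq : q.IsPrincipal) (hlt : .add p b < q) :
    p < q ∧ b < q := by
  have hpq : p < q := (Tm.lt_iff_hd_lt hq).1 hlt
  exact ⟨hpq, (Tm.lt_iff_hd_lt hq).2 (h.of_add.2.2.2.2.trans_lt hpq)⟩

theorem normN_pos (ha : Stratified a) (h0 : a ≠ .zero) : 0 < normN a := by
  induction ha with
  | zero => exact absurd rfl h0
  | one => exact Nat.one_pos
  | psi => rw [normN]; omega
  | add hp _ _ _ _ ihp => exact Nat.add_pos_left (ihp hp.ne_zero) _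

protected theorem mulNat (hp : p.IsPrincipal) (hs : Stratified p) (n : ℕ) :
    Stratified (mulNat p n) := by
  induction n with
  | zero => exact .zero
  | succ n ih =>
    cases n with
    | zero => rwa [mulNat_one]
    | succ n =>
      have hhd := hd_mulNat_succ hp n
      rw [mulNat_add_two hp]
      exact .add hp hs ih (fun h0 => hp.ne_zero (by rw [← hhd, h0]; rfl)) hhd.le

protected theorem natToTm (n : ℕ) : Stratified (natToTm n) :=
  natToTm_eq_mulNat n ▸ Stratified.mulNat Tm.isPrincipal_one .one n

theorem psiClause_of_tp (h : Stratified (.psi i a))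
    (htp : a = .zero ∨ tp a = .one ∨ ∃ j, tp a = OmegaN j ∧ OmegaN j ≤ a) : PsiClause i a := by
  obtain ⟨-, ha, hlt⟩ := h.of_psi
  rcases htp with rfl | h1 | ⟨j, hj, hle⟩
  · exact .zero rfl (by simp [tp]) fun x => by simp [fund, tp]
  · exact .succ h1 (by simp [tp, h1]) fun x => by simp [fund, h1]
  · have hj3 : j < 3 := Tm.OmegaN_lt_OmegaN_iff.1 (hle.trans_lt (ha.lt_OmegaN le_rfl))
    have hji : j < i + 2 := Tm.OmegaN_lt_OmegaN_iff.1 (hle.trans_lt hlt)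
    rcases Nat.lt_succ_iff_lt_or_eq.1 hji with hji | rfl
    · have hij : ¬ (i = 0 ∧ j = 1) ∧ ¬ (i = 1 ∧ j = 2) := by omega
      refine .inner j (by omega) hj ?_ fun x => ?_
      · simp [tp, hj, OmegaT, Omega2T, hij]
      · simp [fund, hj, OmegaT, Omega2T, hij]
    · have hi : i = 0 ∨ i = 1 := by omega
      refine .collapse hj ?_ fun x => ?_
      · rcases hi with rfl | rfl <;> simp [tp, hj, OmegaT, Omega2T]
      · rw [collapseIter_eq_rec]
        rcases hi with rfl | rfl <;> simp [fund, hj, OmegaT, Omega2T]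

theorem tp_cases (ha : Stratified a) :
    a = .zero ∨ tp a = .one ∨ ∃ j, tp a = OmegaN j ∧ OmegaN j ≤ a := by
  induction ha with
  | zero => exact .inl rfl
  | one => exact .inr (.inl rfl)
  | @psi i a hi ha hlt ih =>
    refine .inr (.inr ?_)
    rcases (Stratified.psi hi ha hlt).psiClause_of_tp ih with
      ⟨-, htp, -⟩ | ⟨-, htp, -⟩ | ⟨-, htp, -⟩ | ⟨j, hj, -, htp, -⟩
    · exact ⟨i, htp, Tm.OmegaN_le_psi le_rfl⟩
    · exact ⟨0, htp, Tm.OmegaN_le_psi i.zero_le⟩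
    · exact ⟨0, htp, Tm.OmegaN_le_psi i.zero_le⟩
    · exact ⟨j, htp, Tm.OmegaN_le_psi hj⟩
  | add hp _ _ hb hle _ ihb =>
    rcases ihb with h | h | ⟨j, hj, hjb⟩
    · exact absurd h hb
    · exact .inr (.inl h)
    · exact .inr (.inr ⟨j, hj, (Tm.hd_le_hd hjb).trans hle |>.trans (Tm.lt_add_self hp hb).le⟩)

theorem psiClause (h : Stratified (.psi i a)) : PsiClause i a :=
  h.psiClause_of_tp h.of_psi.2.1.tp_cases

theorem tp_le_OmegaN (ha : Stratified a) (h : a < OmegaN (n + 1)) : tp a ≤ OmegaN n := by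
  rcases ha.tp_cases with rfl | h1 | ⟨j, hj, hja⟩
  · exact Tm.zero_lt_psi.le
  · exact h1 ▸ Tm.one_lt_psi.le
  · have hjn : j < n + 1 := Tm.OmegaN_lt_OmegaN_iff.1 (hja.trans_lt h)
    exact hj ▸ Tm.OmegaN_mono (Nat.le_of_lt_succ hjn)

protected theorem collapseIter (h : Stratified (.psi i a)) (htp : tp a = OmegaN (i + 1))
    (hfund : ∀ x, Stratified x → x < tp a → Stratified (fund a x) ∧ fund a x < a) (n : ℕ) :
    Stratified (collapseIter i a n) ∧ collapseIter i a n < OmegaN (i + 1) := by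
  induction n with
  | zero => exact ⟨.zero, Tm.zero_lt_psi⟩
  | succ n ih =>
    obtain ⟨hs, hlt⟩ := hfund _ ih.1 (htp ▸ ih.2)
    exact ⟨.psi h.of_psi.1 hs (hlt.trans h.of_psi.2.2), Tm.psi_lt_psi_iff.2 (.inl i.lt_succ_self)⟩

theorem fund_add (h : Stratified (.add p b)) (hle : fund b x ≤ b) :
    fund (.add p b) x = if fund b x = .zero then p else .add p (fund b x) := by
  obtain ⟨hp, -, -, -, hbp⟩ := h.of_add
  rw [fund]
  split_ifs with h0
  · rw [h0, Tm.addT_zero]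
  · exact Tm.addT_eq_add hp h0 ((Tm.hd_le_hd hle).trans hbp)

theorem stratified_fund_and_fund_lt (ha : Stratified a) :
    ∀ x, Stratified x → x < tp a → Stratified (fund a x) ∧ fund a x < a := by
  induction ha with
  | zero => exact fun x _ hx => absurd hx Tm.not_lt_zero
  | one =>
    intro x _ _
    rw [fund]
    exact ⟨.zero, Tm.zero_lt_one⟩
  | @psi i a hi ha hlt ih =>
    intro x hxs hx
    have hs : Stratified (.psi i a) := .psi hi ha hlt
    have psi_fund {y : Tm} (hys : Stratified y) (hy : y < tp a) :
        Stratified (.psi i (fund a y)) ∧ Tm.psi i (fund a y) < .psi i a :=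
      have ⟨h, h'⟩ := ih y hys hy
      ⟨.psi hi h (h'.trans hlt), Tm.psi_lt_psi_iff.2 (.inr ⟨rfl, h'⟩)⟩
    rcases hs.psiClause with ⟨rfl, htp, hf⟩ | ⟨h1, -, hf⟩ | ⟨h1, -, hf⟩ |
      ⟨j, -, hj, htp, hf⟩
    · rw [hf]
      exact ⟨hxs, hx.trans_eq htp⟩
    · have ⟨h, h'⟩ := psi_fund .zero (h1 ▸ Tm.zero_lt_one)
      exact hf x ▸ ⟨Stratified.mulNat Tm.isPrincipal_psi h _,
        mulNat_lt Tm.isPrincipal_psi Tm.isPrincipal_psi h' _⟩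
    · have ⟨h, h'⟩ := hs.collapseIter h1 ih (tmToNat x)
      exact hf x ▸ psi_fund h (h1 ▸ h')
    · exact hf x ▸ psi_fund hxs (hj ▸ htp ▸ hx)
  | @add p b hp hps hbs hb hbp _ ih =>
    intro x hxs hx
    have ⟨h, h'⟩ := ih x hxs hx
    rw [fund_add (.add hp hps hbs hb hbp) h'.le]
    split_ifs with h0
    · exact ⟨hps, Tm.lt_add_self hp hb⟩
    · exact ⟨.add hp hps h h0 ((Tm.hd_le_hd h'.le).trans hbp), Tm.add_lt_add_left h'⟩

protected theorem fund (ha : Stratified a) (hxs : Stratified x) (hx : x < tp a) :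
    Stratified (fund a x) :=
  (ha.stratified_fund_and_fund_lt x hxs hx).1

theorem fund_lt (ha : Stratified a) (hxs : Stratified x) (hx : x < tp a) : fund a x < a :=
  (ha.stratified_fund_and_fund_lt x hxs hx).2

theorem normN_fund_add (h : Stratified (.add p b)) (hxs : Stratified x) (hx : x < tp b) :
    normN (fund (.add p b) x) = normN p + normN (fund b x) := by
  rw [h.fund_add (h.of_add.2.2.1.fund_lt hxs hx).le]
  split_ifs with h0
  · rw [h0, normN, add_zero]
  · rw [normN]

theorem normN_of_tp_eq_one (ha : Stratified a) (h1 : tp a = .one) :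
    normN a = normN (fund a .zero) + 1 := by
  induction ha with
  | zero => simp [tp] at h1
  | one => simp [fund, normN]
  | psi =>
    rw [tp] at h1
    split_ifs at h1 <;> simp_all [omegaT]
  | add hp hps hbs hb hbp _ ih =>
    rw [tp] at h1
    rw [normN_fund_add (.add hp hps hbs hb hbp) .zero (h1 ▸ Tm.zero_lt_one), normN, ih h1,
      add_assoc]

theorem normN_le_normN_fund (ha : Stratified a) (h1 : tp a ≠ .one) :
    ∀ x, Stratified x → x ≠ .zero → x < tp a → (tp a = omegaT → 2 ≤ tmToNat x) →
      normN a ≤ normN (fund a x) := by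
  induction ha with
  | zero => exact fun x _ _ hx => absurd hx Tm.not_lt_zero
  | one => exact absurd rfl h1
  | @psi i a hi ha hlt ih =>
    intro x hxs hx0 hx hω
    have hs : Stratified (.psi i a) := .psi hi ha hlt
    rcases hs.psiClause with ⟨rfl, -, hf⟩ | ⟨htpa, htp, hf⟩ | ⟨htpa, htp, hf⟩ |
      ⟨j, -, hj, htp, hf⟩
    · rw [hf, normN, normN]
      exact hxs.normN_pos hx0
    · have hn := hω htp
      rw [hf, normN_mulNat Tm.isPrincipal_psi, normN, normN, ha.normN_of_tp_eq_one htpa]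
      nlinarith
    · obtain ⟨n, hn⟩ : ∃ n, tmToNat x = n + 1 := ⟨tmToNat x - 1, by have := hω htp; omega⟩
      have ⟨h, h'⟩ := hs.collapseIter htpa ha.stratified_fund_and_fund_lt (n + 1)
      rw [hf, hn, normN, normN]
      gcongr
      exact ih (by simp [htpa]) _ h (by simp [collapseIter]) (htpa ▸ h') (by simp [htpa, omegaT])
    · rw [htp, ← hj] at h1 hx hω
      rw [hf, normN, normN]
      gcongr
      exact ih h1 x hxs hx0 hx hω
  | add hp hps hbs hb hbp _ ih =>
    intro x hxs hx0 hx hω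
    rw [normN_fund_add (.add hp hps hbs hb hbp) hxs hx, normN]
    gcongr
    exact ih h1 x hxs hx0 hx hω

end Stratified

/-! ### Accessibility -/

/-- One step of descent along a fundamental sequence, at an index taken from `Q`. -/
def Descent (Q : Set Tm) (b a : Tm) : Prop :=
  ∃ x ∈ Q, Stratified x ∧ x < tp a ∧ b = fund a x

/-- The indices admitted in a descent from a term below `Ωₙ₊₁`: terms below `Ωₙ` which for `n > 0`
are themselves accessible, as in an iterated inductive definition. -/
def indexSet : ℕ → Set Tm
  | 0 => {x | x < omegaT}
  | n + 1 => {x | x < OmegaN (n + 1) ∧ Acc (Descent (indexSet n)) x}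

section Accessibility

variable {Q Q' : Set Tm} {a b p x : Tm} {i n : ℕ}

theorem acc_descent_zero : Acc (Descent Q) .zero :=
  .intro _ fun _ ⟨_, _, _, hx, _⟩ => absurd hx Tm.not_lt_zero

theorem acc_descent_add (hp : Acc (Descent Q) p) (hb : Acc (Descent Q) b)
    (h : Stratified (.add p b)) : Acc (Descent Q) (.add p b) := by
  induction hb with
  | intro b _ ih =>
    refine .intro _ fun _ ⟨x, hxQ, hxs, hx, hf⟩ => ?_
    have hs := h.fund hxs hx
    rw [h.fund_add (h.of_add.2.2.1.fund_lt hxs hx).le] at hs hf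
    split_ifs at hs hf
    · exact hf ▸ hp
    · exact hf ▸ ih _ ⟨x, hxQ, hxs, hx, rfl⟩ hs

theorem acc_descent_mulNat (hp : p.IsPrincipal) (hps : Stratified p) (hacc : Acc (Descent Q) p)
    (n : ℕ) : Acc (Descent Q) (mulNat p n) := by
  induction n with
  | zero => exact acc_descent_zero
  | succ n ih =>
    cases n with
    | zero => rwa [mulNat_one]
    | succ n =>
      have hs := Stratified.mulNat hp hps (n + 2)
      rw [mulNat_add_two hp] at hs ⊢
      exact acc_descent_add hacc ih hs

theorem acc_descent_of_lt_omega (ha : Stratified a) (h : a < omegaT) : Acc (Descent Q) a := by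
  induction ha with
  | zero => exact acc_descent_zero
  | one =>
    refine .intro _ fun _ ⟨_, _, _, _, hf⟩ => hf ▸ ?_
    rw [fund]
    exact acc_descent_zero
  | psi => exact absurd h (Tm.OmegaN_le_psi (Nat.zero_le _)).not_gt
  | add hp hps hbs hb hbp ihp ihb =>
    have hs := Stratified.add hp hps hbs hb hbp
    have ⟨hpω, hbω⟩ := hs.lt_of_add_lt Tm.isPrincipal_psi h
    exact acc_descent_add (ihp hpω) (ihb hbω) hs

theorem acc_descent_of_inter_subset
    (hQ : ∀ x, Stratified x → x < OmegaN n → x ∈ Q' → x ∈ Q)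
    (ha : Stratified a) (h : a < OmegaN (n + 1)) (hacc : Acc (Descent Q) a) :
    Acc (Descent Q') a := by
  induction hacc with
  | intro a _ ih =>
    refine .intro _ fun _ ⟨x, hxQ, hxs, hx, hf⟩ => hf ▸ ?_
    exact ih _ ⟨x, hQ x hxs (hx.trans_le (ha.tp_le_OmegaN h)) hxQ, hxs, hx, rfl⟩
      (ha.fund hxs hx) ((ha.fund_lt hxs hx).trans h)

theorem mem_indexSet_succ_iff (hxs : Stratified x) (hx : x < OmegaN n) :
    x ∈ indexSet (n + 1) ↔ x ∈ indexSet n := by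
  have hlt : x < OmegaN (n + 1) := hx.trans_le (Tm.OmegaN_mono n.le_succ)
  induction n generalizing x with
  | zero => exact iff_of_true ⟨hlt, acc_descent_of_lt_omega hxs hx⟩ hx
  | succ n ih =>
    have hiff (y : Tm) (hys : Stratified y) (hy : y < OmegaN n) :=
      ih hys hy (hy.trans_le (Tm.OmegaN_mono n.le_succ))
    constructor <;> intro h
    · exact ⟨hx, acc_descent_of_inter_subset (fun y hys hy => (hiff y hys hy).2) hxs hx h.2⟩
    · exact ⟨hlt, acc_descent_of_inter_subset (fun y hys hy => (hiff y hys hy).1) hxs hx h.2⟩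

theorem mem_indexSet_of_le {m : ℕ} (hxs : Stratified x) (hx : x < OmegaN n) (h : x ∈ indexSet n)
    (hnm : n ≤ m) : x ∈ indexSet m := by
  induction m, hnm using Nat.le_induction with
  | base => exact h
  | succ m hnm ih =>
    exact (mem_indexSet_succ_iff hxs (hx.trans_le (Tm.OmegaN_mono hnm))).2 ih

theorem zero_mem_indexSet (n : ℕ) : Tm.zero ∈ indexSet n := by
  cases n
  exacts [Tm.zero_lt_psi, ⟨Tm.zero_lt_psi, acc_descent_zero⟩]

theorem acc_descent_psi (hacc : Acc (Descent (indexSet (i + 1))) a) (h : Stratified (.psi i a)) :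
    Acc (Descent (indexSet i)) (.psi i a) := by
  induction hacc with
  | intro a _ ih =>
    have acc_psi_fund {y : Tm} (hyQ : y ∈ indexSet (i + 1)) (hys : Stratified y) (hy : y < tp a) :
        Stratified (.psi i (fund a y)) ∧ Acc (Descent (indexSet i)) (.psi i (fund a y)) :=
      have ⟨hi, ha, hlt⟩ := h.of_psi
      have hs := Stratified.psi hi (ha.fund hys hy) ((ha.fund_lt hys hy).trans hlt)
      ⟨hs, ih _ ⟨y, hyQ, hys, hy, rfl⟩ hs⟩
    refine .intro _ fun _ ⟨x, hxQ, hxs, hx, hf⟩ => hf ▸ ?_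
    rcases h.psiClause with ⟨rfl, htp, hf⟩ | ⟨h1, -, hf⟩ | ⟨h1, -, hf⟩ |
      ⟨j, hji, hj, htp, hf⟩
    · rw [hf]
      exact ((mem_indexSet_succ_iff hxs (htp ▸ hx)).2 hxQ).2
    · have ⟨hs, hacc⟩ := acc_psi_fund (zero_mem_indexSet _) .zero (h1 ▸ Tm.zero_lt_one)
      exact hf x ▸ acc_descent_mulNat Tm.isPrincipal_psi hs hacc _
    · have iter_spec := h.collapseIter h1 h.of_psi.2.1.stratified_fund_and_fund_lt
      have iter_mem (n : ℕ) : collapseIter i a n ∈ indexSet (i + 1) := by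
        induction n with
        | zero => exact zero_mem_indexSet _
        | succ n ihn =>
          have ⟨hs, hlt⟩ := iter_spec n
          exact ⟨(iter_spec (n + 1)).2, (acc_psi_fund ihn hs (h1 ▸ hlt)).2⟩
      have ⟨hs, hlt⟩ := iter_spec (tmToNat x)
      exact hf x ▸ (acc_psi_fund (iter_mem _) hs (h1 ▸ hlt)).2
    · have hxj : x < OmegaN j := hx.trans_eq htp
      have hxi : x < OmegaN i := hxj.trans_le (Tm.OmegaN_mono hji)
      have hxQ' : x ∈ indexSet (i + 1) := (mem_indexSet_succ_iff hxs hxi).2 hxQ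
      exact hf x ▸ (acc_psi_fund hxQ' hxs (hj ▸ hxj)).2

theorem Stratified.acc_descent (ha : Stratified a) (n : ℕ) (h : a < OmegaN (n + 1)) :
    Acc (Descent (indexSet n)) a := by
  induction ha generalizing n with
  | zero => exact acc_descent_zero
  | one => exact acc_descent_of_lt_omega .one Tm.one_lt_psi
  | @psi i a hi ha hlt ih =>
    have hs := Stratified.psi hi ha hlt
    have hin : i ≤ n := by
      simpa [Tm.psi_lt_psi_iff, Tm.not_lt_zero, Nat.lt_succ_iff] using h
    have hpsi : Tm.psi i a < OmegaN (i + 1) := Tm.psi_lt_psi_iff.2 (.inl i.lt_succ_self)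
    exact (mem_indexSet_of_le hs hpsi ⟨hpsi, acc_descent_psi (ih (i + 1) hlt) hs⟩
      (Nat.succ_le_succ hin)).2
  | add hp hps hbs hb hbp ihp ihb =>
    have hs := Stratified.add hp hps hbs hb hbp
    have ⟨hpn, hbn⟩ := hs.lt_of_add_lt Tm.isPrincipal_psi h
    exact acc_descent_add (ihp n hpn) (ihb n hbn) hs

end Accessibility

/-! ### The Hardy hierarchy -/

theorem HRel.le_value {a : Tm} {k n : ℕ} (hk : 1 ≤ k) : HRel a k n → k ≤ n
  | .zero => le_rfl
  | .succ _ h => (le_value hk h).trans (Nat.le_mul_of_pos_right _ hk)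
  | .lim _ _ h => le_value hk h

theorem HIter.exists_index {a b : Tm} {k j : ℕ} (hk : 1 ≤ k) (h : HIter a k j b) :
    ∃ n, b = fund a (natToTm n) ∧ (j ≠ 0 → k ≤ n) := by
  cases h with
  | zero => exact ⟨0, rfl, fun h => absurd rfl h⟩
  | succ _ h => exact ⟨_, rfl, fun _ => h.le_value hk⟩

theorem HRel.normN_le {a : Tm} {k n : ℕ} (hk : 2 ≤ k) (ha : Stratified a) :
    HRel a k n → normN a ≤ n
  | .zero => Nat.zero_le _
  | .succ (n := n) h1 h => by
    have hN : normN (fund a .zero) ≤ n :=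
      normN_le hk (ha.fund .zero (h1 ▸ Tm.zero_lt_one)) h
    have hkn : k ≤ n := h.le_value (by omega)
    rw [ha.normN_of_tp_eq_one h1]
    nlinarith
  | .lim hω hiter h => by
    obtain ⟨j, hβ, hj⟩ := hiter.exists_index (by omega)
    have hj2 : 2 ≤ j := hk.trans (hj (by omega))
    have hlt : natToTm j < tp a := hω ▸ natToTm_lt_psi j
    have hs := Stratified.natToTm j
    have hj0 : natToTm j ≠ .zero := fun h0 => by
      have := tmToNat_natToTm j
      rw [h0, tmToNat] at this
      omega
    calc normN a ≤ normN (fund a (natToTm j)) :=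
          ha.normN_le_normN_fund (by simp [hω, omegaT]) _ hs hj0 hlt
            fun _ => (tmToNat_natToTm j).symm ▸ hj2
      _ = normN _ := by rw [hβ]
      _ ≤ _ := normN_le hk (hβ ▸ ha.fund hs hlt) h

theorem exists_hIter {a : Tm} {k : ℕ} (h : ∀ n, ∃ v, HRel (fund a (natToTm n)) k v) (j : ℕ) :
    ∃ n, HIter a k j (fund a (natToTm n)) := by
  induction j with
  | zero => exact ⟨0, .zero⟩
  | succ j ih =>
    obtain ⟨n, hn⟩ := ih
    obtain ⟨v, hv⟩ := h n
    exact ⟨v, .succ hn hv⟩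

theorem Stratified.exists_hRel {a : Tm} (ha : Stratified a) (h : a < OmegaT) (k : ℕ) :
    ∃ n, HRel a k n := by
  induction ha.acc_descent 0 h with
  | intro a _ ih =>
    have exists_hRel_fund {x : Tm} (hxs : Stratified x) (hxω : x < omegaT) (hx : x < tp a) :
        ∃ n, HRel (fund a x) k n :=
      ih _ ⟨x, hxω, hxs, hx, rfl⟩ (ha.fund hxs hx) ((ha.fund_lt hxs hx).trans h)
    rcases ha.tp_cases with rfl | h1 | ⟨j, hj, hja⟩
    · exact ⟨k, .zero⟩
    · obtain ⟨n, hn⟩ := exists_hRel_fund .zero Tm.zero_lt_psi (h1 ▸ Tm.zero_lt_one)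
      exact ⟨_, .succ h1 hn⟩
    · obtain rfl : j = 0 := Nat.lt_one_iff.1 (Tm.OmegaN_lt_OmegaN_iff.1 (hja.trans_lt h))
      have hfund (n : ℕ) := exists_hRel_fund (Stratified.natToTm n)
        (natToTm_lt_psi n) (hj ▸ natToTm_lt_psi n)
      obtain ⟨n, hiter⟩ := exists_hIter hfund k
      obtain ⟨v, hv⟩ := hfund n
      exact ⟨v, .lim hj hiter hv⟩

theorem Stratified.normN_le_H {a : Tm} {k : ℕ} (hk : 2 ≤ k) (ha : Stratified a) (h : a < OmegaT) :
    normN a ≤ H a k :=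
  HRel.normN_le hk ha (Nat.sInf_mem (ha.exists_hRel h k))

theorem finite_setOf_stratified_normN_le (m : ℕ) : {a | Stratified a ∧ normN a ≤ m}.Finite := by
  induction m with
  | zero =>
    refine (Set.finite_singleton Tm.zero).subset fun a ⟨ha, hN⟩ => ?_
    by_contra h0
    exact (ha.normN_pos h0).not_ge hN
  | succ m ih =>
    refine (((Set.toFinite {.zero, .one}).union ((Set.finite_Iio 3).image2 Tm.psi ih)).union
      (ih.image2 Tm.add ih)).subset ?_
    rintro a ⟨ha, hN⟩
    cases ha with
    | zero => exact .inl (.inl (.inl rfl))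
    | one => exact .inl (.inl (.inr rfl))
    | psi hi ha hlt =>
      rw [normN] at hN
      exact .inl (.inr ⟨_, hi, _, ⟨ha, by omega⟩, rfl⟩)
    | add hp hps hbs hb hbp =>
      rw [normN] at hN
      have hpN := hps.normN_pos hp.ne_zero
      have hbN := hbs.normN_pos hb
      exact .inr ⟨_, ⟨hps, by omega⟩, _, ⟨hbs, by omega⟩, rfl⟩

theorem InOT.stratified {a : Tm} (h : InOT a) : Stratified a := by
  induction h with
  | zero => exact .zero
  | one => exact .one
  | psi2 _ ih => exact .psi (by omega) ih (ih.lt_OmegaN (by omega))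
  | psi1 _ _ ih => exact .psi (by omega) ih (ih.lt_OmegaN (by omega))
  | psi0 _ _ hlt ih => exact .psi (by omega) ih hlt.lt
  | add hT _ _ iha ihb =>
    cases hT with
    | add hp _ _ hb hle => exact .add hp iha ihb hb hle.le

theorem hardy_fibers_finite_general (m k : ℕ) (hk : 2 ≤ k) :
    {a : Tm | Stratified a ∧ a < OmegaT ∧ H a k ≤ m}.Finite :=
  (finite_setOf_stratified_normN_le m).subset fun _ ⟨ha, hlt, hH⟩ =>
    ⟨ha, (ha.normN_le_H hk hlt).trans hH⟩

/-- For each `m` and `k ≥ 2` there are only finitely many `α ∈ OT₀ ∩ Ω` with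
`H_α(k) ≤ m`. -/
theorem hardy_fibers_finite (m k : ℕ) (hk : 2 ≤ k) :
    {a : Tm | InOT0 a ∧ TLt a OmegaT ∧ H a k ≤ m}.Finite := by
  exact (hardy_fibers_finite_general m k hk).subset fun _ ⟨hOT, hlt, hH⟩ =>
    ⟨hOT.1.stratified, hlt.lt, hH⟩
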